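/- arXiv:1410.5043 — 2 statements merged into one kernel-verified Lean document; each statement's English description precedes it below -/
import Mathlib

section
/- For every complex number z with −1 < Re(z) < 0 and every real s, one has Γ(z+is) Γ(z−is) = 4 ∫_0^∞ (x/2)^{2z} K_{2is}(x) · ( 1 + (2/x)^{2z} · (4z/Γ(1−2z)) · K_{2z}(x) ) · (1/x) dx, where the integral converges absolutely. -/
open MeasureTheory

/-- Macdonald function (modified Bessel function of the second kind) `K_w(y)` for
`y > 0` and `w ∈ ℂ`, defined by `K_w(y) = ∫_0^∞ e^{−y cosh t} cosh(w t) dt`. -/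
noncomputable def macdonaldK (w : ℂ) (y : ℝ) : ℂ :=
  ∫ t in Set.Ioi (0 : ℝ), Complex.exp (-(y : ℂ) * Real.cosh t) * Complex.cosh (w * t)

/-!
Write `Γ_y(w) = ∫₀^∞ t^(w-1) e^(-t-y/t) dt`, so that `Γ_y(w) = 2 (x/2)^w K_w(x)` for `y = (x/2)²`.
This substitution turns the integral into the Mellin transform at `a = z + is` of
`y ↦ Γ_y(b - a) (Γ(c) - Γ_y(c))`, where `b = z - is` and `c = -a - b`. Inserting the integrals for
the two factors gives an absolutely convergent triple integral over `y`, `B` and `u`. Its integral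
over `y` is evaluated by Cauchy and Saalschütz's continuation of Euler's integral,
`Γ(a) = ∫₀^∞ v^(a-1) (e^(-v) - 1) dv` for `-1 < Re a < 0`. In the coordinates `k = B / u` and `u`
the integral over `u` is an Euler integral, and up to a factor `Γ(a)` there remains the regularised
beta integral `∫₀^∞ k^(b-1) Γ(s) ((1 + k)^(-s) - 1) dk = Γ(b) Γ(s - b)` at `s = -a`, which follows
in the same coordinates from the product of the integrals for `Γ(b)` and `Γ(s - b)`.
-/

open Set Filter Topology Complex

local notation "μ₊" => volume.restrict (Ioi (0 : ℝ))

lemma ofReal_inv_cpow_neg {x : ℝ} (hx : 0 ≤ x) (a : ℂ) :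
    ((x⁻¹ : ℝ) : ℂ) ^ (-a) = (x : ℂ) ^ a := by
  rw [ofReal_inv, inv_cpow_ofReal_nonneg hx, cpow_neg, inv_inv]

section Mellin

variable {E : Type*} [NormedAddCommGroup E] [NormedSpace ℂ E] {f : ℝ → E} {s : ℂ} {m : E}

lemma hasMellin_comp_mul_left (hf : HasMellin f s m) {r : ℝ} (hr : 0 < r) :
    HasMellin (fun t => f (r * t)) s ((r : ℂ) ^ (-s) • m) :=
  ⟨(MellinConvergent.comp_mul_left hr).2 hf.1, by rw [mellin_comp_mul_left f s hr, hf.2]⟩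

lemma hasMellin_comp_rpow (hf : HasMellin f s m) {r : ℝ} (hr : r ≠ 0) :
    HasMellin (fun t => f (t ^ r)) (r * s) (|r|⁻¹ • m) := by
  have hrs : r * s / r = s := mul_div_cancel_left₀ s (ofReal_ne_zero.2 hr)
  exact ⟨(MellinConvergent.comp_rpow hr).2 (hrs.symm ▸ hf.1),
    by rw [mellin_comp_rpow f, hrs, hf.2]⟩

lemma hasMellin_congr {g : ℝ → E} (hf : HasMellin f s m) (hfg : EqOn f g (Ioi 0)) :
    HasMellin g s m := by
  have hpt : EqOn (fun t : ℝ => (t : ℂ) ^ (s - 1) • f t) (fun t : ℝ => (t : ℂ) ^ (s - 1) • g t)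
      (Ioi 0) := fun t ht => congrArg _ (hfg ht)
  exact ⟨IntegrableOn.congr_fun hf.1 hpt measurableSet_Ioi,
    (setIntegral_congr_fun measurableSet_Ioi hpt).symm.trans hf.2⟩

lemma hasMellin_comp_div_two_sq (hf : HasMellin f s m) :
    HasMellin (fun t => f ((t / 2) ^ 2)) (2 * s) ((2 : ℂ) ^ (2 * s) • (2 : ℝ)⁻¹ • m) := by
  have := hasMellin_comp_mul_left (hasMellin_comp_rpow hf two_ne_zero)
    (inv_pos.2 (zero_lt_two (α := ℝ)))
  simpa only [ofReal_inv_cpow_neg zero_le_two, abs_two, ofReal_ofNat, Real.rpow_ofNat,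
    inv_mul_eq_div] using this

end Mellin

/-! ### Mellin transforms of exponentials -/

lemma norm_cexp_neg_sub_one_le_rpow {θ v : ℝ} (hθ : 0 ≤ θ) (hθ1 : θ ≤ 1) (hv : 0 < v) :
    ‖cexp (-v) - 1‖ ≤ v ^ θ := by
  have hle : Real.exp (-v) ≤ 1 := Real.exp_le_one_iff.2 (by linarith)
  rw [show cexp (-v) - 1 = ((Real.exp (-v) - 1 : ℝ) : ℂ) by push_cast; rfl, norm_real,
    Real.norm_of_nonpos (by linarith), neg_sub]
  rcases le_total v 1 with h | h
  · calc 1 - Real.exp (-v) ≤ v := by linarith [Real.one_sub_le_exp_neg v]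
      _ = v ^ (1 : ℝ) := (Real.rpow_one v).symm
      _ ≤ v ^ θ := Real.rpow_le_rpow_of_exponent_ge hv h hθ1
  · calc 1 - Real.exp (-v) ≤ 1 := by linarith [Real.exp_pos (-v)]
      _ ≤ v ^ θ := Real.one_le_rpow h hθ

lemma norm_cpow_mul_cexp_neg_sub_one_le {b : ℂ} {θ v : ℝ} (hθ : 0 ≤ θ) (hθ1 : θ ≤ 1)
    (hv : 0 < v) : ‖(v : ℂ) ^ b * (cexp (-v) - 1)‖ ≤ v ^ (b.re + θ) := by
  rw [norm_mul, norm_cpow_eq_rpow_re_of_pos hv, Real.rpow_add hv]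
  gcongr
  exact norm_cexp_neg_sub_one_le_rpow hθ hθ1 hv

lemma mellinConvergent_cexp_neg {s : ℂ} (hs : 0 < s.re) :
    MellinConvergent (fun v : ℝ => cexp (-v)) s :=
  (GammaIntegral_convergent hs).congr_fun (fun v _ => by simp [mul_comm]) measurableSet_Ioi

lemma hasMellin_cexp_neg {s : ℂ} (hs : 0 < s.re) :
    HasMellin (fun v : ℝ => cexp (-v)) s (Gamma s) :=
  ⟨mellinConvergent_cexp_neg hs, by
    rw [Gamma_eq_integral hs, GammaIntegral_eq_mellin]; simp only [ofReal_exp, ofReal_neg]⟩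

lemma mellinConvergent_cexp_neg_sub_one {b : ℂ} (hb : -1 < b.re) (hb0 : b.re < 0) :
    MellinConvergent (fun v : ℝ => cexp (-v) - 1) b := by
  have hcont : Continuous (fun v : ℝ => cexp (-v) - 1) := by fun_prop
  have hbound {θ v : ℝ} (hθ : 0 ≤ θ) (hθ1 : θ ≤ 1) (hv : 0 < v) :
      ‖cexp (-v) - 1‖ ≤ 1 * ‖v ^ (- -θ)‖ := by
    rw [one_mul, neg_neg, Real.norm_of_nonneg (by positivity)]
    exact norm_cexp_neg_sub_one_le_rpow hθ hθ1 hv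
  refine mellinConvergent_of_isBigO_rpow (a := -0) (b := -1)
    (hcont.locallyIntegrable.locallyIntegrableOn _) (.of_bound 1 ?_) (by simpa) (.of_bound 1 ?_) hb
  · filter_upwards [eventually_gt_atTop 0] with v hv using hbound le_rfl zero_le_one hv
  · filter_upwards [self_mem_nhdsWithin] with v hv using hbound zero_le_one le_rfl hv

lemma hasMellin_cexp_neg_sub_one {b : ℂ} (hb : -1 < b.re) (hb0 : b.re < 0) :
    HasMellin (fun v : ℝ => cexp (-v) - 1) b (Gamma b) := by
  have hne : b ≠ 0 := by rintro rfl; simp at hb0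
  have hconv := mellinConvergent_cexp_neg_sub_one hb hb0
  have hGamma := hasMellin_cexp_neg (s := b + 1) (by simpa using by linarith)
  refine ⟨hconv, mul_left_cancel₀ hne ?_⟩
  simp only [HasMellin, MellinConvergent, mellin, smul_eq_mul, add_sub_cancel_right]
    at hGamma hconv ⊢
  have hzero : Tendsto (fun v : ℝ => (v : ℂ) ^ b * (cexp (-v) - 1)) (𝓝[>] 0) (𝓝 0) := by
    refine squeeze_zero_norm' (a := fun v => v ^ (b.re + 1)) ?_ ?_
    · filter_upwards [self_mem_nhdsWithin] with v hv
        using norm_cpow_mul_cexp_neg_sub_one_le zero_le_one le_rfl hv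
    · have := Real.continuousAt_rpow_const 0 (b.re + 1) (Or.inr (by linarith))
      simpa [Real.zero_rpow (by linarith : b.re + 1 ≠ 0)] using
        this.tendsto.mono_left nhdsWithin_le_nhds
  have htop : Tendsto (fun v : ℝ => (v : ℂ) ^ b * (cexp (-v) - 1)) atTop (𝓝 0) := by
    refine squeeze_zero_norm' (a := fun v => v ^ (-(-b.re + 0))) ?_
      (tendsto_rpow_neg_atTop (by linarith))
    filter_upwards [eventually_gt_atTop 0] with v hv
    simpa using norm_cpow_mul_cexp_neg_sub_one_le (b := b) le_rfl zero_le_one hv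
  have hparts := integral_Ioi_mul_deriv_eq_deriv_mul (u := fun v : ℝ => (v : ℂ) ^ b)
    (u' := fun v : ℝ => b * (v : ℂ) ^ (b - 1)) (v := fun v : ℝ => cexp (-v) - 1)
    (v' := fun v : ℝ => -cexp (-v))
    (fun v hv => by simpa using hasDerivAt_ofReal_cpow_const (ne_of_gt hv) hne)
    (fun v _ => by simpa using ((ofRealCLM.hasDerivAt (x := v)).neg.cexp).sub_const 1)
    (by simpa [Pi.mul_def] using hGamma.1.neg)
    (IntegrableOn.congr_fun (hconv.const_mul b) (fun v _ => (mul_assoc ..).symm) measurableSet_Ioi)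
    hzero htop
  simp only [mul_neg, integral_neg, hGamma.2, mul_assoc, integral_const_mul] at hparts
  rw [← Gamma_add_one b hne]
  linear_combination hparts

lemma hasMellin_cexp_neg_mul {s : ℂ} (hs : 0 < s.re) {p : ℝ} (hp : 0 < p) :
    HasMellin (fun v : ℝ => cexp (-(p * v))) s ((p : ℂ) ^ (-s) * Gamma s) := by
  simpa using hasMellin_comp_mul_left (hasMellin_cexp_neg hs) hp

lemma hasMellin_cexp_neg_mul_sub_cexp_neg_mul {a : ℂ} (ha : -1 < a.re) (ha0 : a.re < 0)
    {p q : ℝ} (hp : 0 < p) (hq : 0 < q) :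
    HasMellin (fun v : ℝ => cexp (-(p * v)) - cexp (-(q * v))) a
      (Gamma a * ((p : ℂ) ^ (-a) - (q : ℂ) ^ (-a))) := by
  have hsub {r : ℝ} (hr : 0 < r) := hasMellin_comp_mul_left (hasMellin_cexp_neg_sub_one ha ha0) hr
  have := hasMellin_sub (hsub hp).1 (hsub hq).1
  rw [(hsub hp).2, (hsub hq).2] at this
  simpa only [smul_eq_mul, sub_sub_sub_cancel_right, ofReal_mul, ← sub_mul,
    mul_comm (Gamma a)] using this

/-! ### The regularised beta integral -/

section Ratio

variable {E : Type*} [NormedAddCommGroup E] {f : ℝ × ℝ → E}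

lemma integrable_comp_mul_prod [NormedSpace ℝ E] (hfm : StronglyMeasurable f)
    (hf : Integrable f (μ₊.prod μ₊)) :
    Integrable (fun q : ℝ × ℝ => q.2 • f (q.2 * q.1, q.2)) (μ₊.prod μ₊) := by
  have hmeas : StronglyMeasurable fun q : ℝ × ℝ => q.2 • f (q.2 * q.1, q.2) :=
    measurable_snd.stronglyMeasurable.smul (hfm.comp_measurable (by fun_prop))
  obtain ⟨hfib, hnorm⟩ := (integrable_prod_iff' hf.1).1 hf
  refine (integrable_prod_iff' hmeas.aestronglyMeasurable).2 ⟨?_, hnorm.congr ?_⟩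
  · filter_upwards [hfib, ae_restrict_mem measurableSet_Ioi] with u hu hpos
    have := (integrableOn_Ioi_comp_mul_left_iff (fun x => f (x, u)) 0 hpos).2 (by simpa using! hu)
    exact this.smul u
  · filter_upwards [ae_restrict_mem measurableSet_Ioi] with u hpos
    have hpos : 0 < u := hpos
    simp only [norm_smul, Real.norm_of_nonneg hpos.le, integral_const_mul]
    rw [integral_comp_mul_left_Ioi (fun x => ‖f (x, u)‖) 0 hpos, mul_zero, smul_eq_mul,
      mul_inv_cancel_left₀ hpos.ne']

lemma integral_comp_mul_prod [NormedSpace ℝ E] (hfm : StronglyMeasurable f)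
    (hf : Integrable f (μ₊.prod μ₊)) :
    ∫ q : ℝ × ℝ, q.2 • f (q.2 * q.1, q.2) ∂(μ₊.prod μ₊) = ∫ q, f q ∂(μ₊.prod μ₊) := by
  rw [integral_prod_symm _ (integrable_comp_mul_prod hfm hf), integral_prod_symm _ hf]
  refine setIntegral_congr_fun measurableSet_Ioi fun u hu => ?_
  rw [integral_smul, integral_comp_mul_left_Ioi (fun x => f (x, u)) 0 hu, mul_zero,
    smul_inv_smul₀ (ne_of_gt hu)]

lemma hasMellin_of_integral_ratio [NormedSpace ℂ E] (hfm : StronglyMeasurable f)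
    (hf : Integrable f (μ₊.prod μ₊)) {g : ℝ → E} {b : ℂ}
    (hg : ∀ k : ℝ, 0 < k →
      ∫ u in Ioi (0 : ℝ), u • f (u * k, u) = (k : ℂ) ^ (b - 1) • g k) :
    HasMellin g b (∫ q, f q ∂(μ₊.prod μ₊)) := by
  have hint := integrable_comp_mul_prod hfm hf
  refine ⟨IntegrableOn.congr_fun hint.integral_prod_left hg measurableSet_Ioi, ?_⟩
  rw [← integral_comp_mul_prod hfm hf, integral_prod _ hint, mellin]
  exact (setIntegral_congr_fun measurableSet_Ioi hg).symm

end Ratio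

lemma ofReal_mul_cpow_mul_cpow {u k : ℝ} (hu : 0 < u) (hk : 0 < k) (b s : ℂ) :
    u * (((u * k : ℝ) : ℂ) ^ (b - 1) * (u : ℂ) ^ (s - b - 1)) =
      (k : ℂ) ^ (b - 1) * (u : ℂ) ^ (s - 1) := by
  have hu' : (u : ℂ) ≠ 0 := ofReal_ne_zero.2 hu.ne'
  rw [ofReal_mul, mul_cpow_ofReal_nonneg hu.le hk.le,
    show s - 1 = (b - 1) + (s - b - 1) + 1 by ring, cpow_add _ _ hu', cpow_add _ _ hu', cpow_one]
  ring

lemma integral_smul_cexp_neg_sub_one_mul_cexp_neg (b : ℂ) {s : ℂ} (hs : 0 < s.re) {k : ℝ}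
    (hk : 0 < k) :
    ∫ u in Ioi (0 : ℝ), u • ((((u * k : ℝ) : ℂ) ^ (b - 1) * (cexp (-(u * k : ℝ)) - 1)) *
        ((u : ℂ) ^ (s - b - 1) * cexp (-u))) =
      (k : ℂ) ^ (b - 1) • (Gamma s * ((1 + k : ℂ) ^ (-s) - 1)) := by
  have hexp {r : ℝ} (hr : 0 < r) := hasMellin_cexp_neg_mul hs hr
  obtain ⟨-, hmellin⟩ := hasMellin_sub (hexp (by linarith : 0 < 1 + k)).1 (hexp one_pos).1
  rw [(hexp (by linarith)).2, (hexp one_pos).2] at hmellin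
  have hpt : EqOn
      (fun u : ℝ => u • ((((u * k : ℝ) : ℂ) ^ (b - 1) * (cexp (-(u * k : ℝ)) - 1)) *
        ((u : ℂ) ^ (s - b - 1) * cexp (-u))))
      (fun u : ℝ => (k : ℂ) ^ (b - 1) *
        ((u : ℂ) ^ (s - 1) • (cexp (-((1 + k : ℝ) * u)) - cexp (-((1 : ℝ) * u))))) (Ioi 0) := by
    intro u hu
    have hadd : cexp (-((1 + k : ℝ) * u)) = cexp (-(u * k : ℝ)) * cexp (-u) := by
      rw [← Complex.exp_add]; push_cast; ring_nf
    simp only [hadd, real_smul, smul_eq_mul, ofReal_one, one_mul]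
    linear_combination (cexp (-(u * k : ℝ)) - 1) * cexp (-u) * ofReal_mul_cpow_mul_cpow hu hk b s
  rw [setIntegral_congr_fun measurableSet_Ioi hpt, integral_const_mul, ← mellin, hmellin,
    smul_eq_mul, ofReal_add, ofReal_one, one_cpow]
  ring

lemma hasMellin_one_add_cpow_neg_sub_one {b s : ℂ} (hb : -1 < b.re) (hb0 : b.re < 0)
    (hs : 0 < s.re) :
    HasMellin (fun k : ℝ => Gamma s * ((1 + k : ℂ) ^ (-s) - 1)) b (Gamma b * Gamma (s - b)) := by
  have hB := hasMellin_cexp_neg_sub_one hb hb0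
  have hU := hasMellin_cexp_neg (s := s - b) (by rw [sub_re]; linarith)
  have hint := hB.1.integrable.mul_prod hU.1.integrable
  simp only [smul_eq_mul] at hint
  have hval : ∫ q : ℝ × ℝ, ((q.1 : ℂ) ^ (b - 1) * (cexp (-q.1) - 1)) *
      ((q.2 : ℂ) ^ (s - b - 1) * cexp (-q.2)) ∂(μ₊.prod μ₊) = Gamma b * Gamma (s - b) := by
    rw [← hB.2, ← hU.2]
    exact integral_prod_mul (fun v : ℝ => (v : ℂ) ^ (b - 1) * (cexp (-v) - 1))
      (fun v : ℝ => (v : ℂ) ^ (s - b - 1) * cexp (-v))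
  rw [← hval]
  exact hasMellin_of_integral_ratio (Measurable.stronglyMeasurable (by fun_prop)) hint
    fun k hk => integral_smul_cexp_neg_sub_one_mul_cexp_neg b hs hk

/-! ### Extended Gamma function and Macdonald function -/

/-- The extended Gamma function of Chaudhry and Zubair, `Γ_y(w)`; the value at `y = 0` is Euler's
integral. In terms of `y = x² / 4` it is an elementary multiple of `macdonaldK w x`, and it is
better suited than the latter to Mellin transforms. -/
noncomputable def extendedGamma (w : ℂ) (y : ℝ) : ℂ :=
  ∫ t in Ioi (0 : ℝ), (t : ℂ) ^ (w - 1) * cexp (-t - y / t)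

section Macdonald

variable {E : Type*} [NormedAddCommGroup E] [NormedSpace ℂ E]

lemma exp_smul_cpow_exp_smul (w : ℂ) (t : ℝ) (x : E) :
    |Real.exp t| • (Real.exp t : ℂ) ^ (w - 1) • x = cexp (w * t) • x := by
  rw [abs_of_pos (Real.exp_pos t), ← Complex.coe_smul, smul_smul,
    cpow_sub _ _ (ofReal_ne_zero.2 (Real.exp_pos t).ne'), cpow_one,
    mul_div_cancel₀ _ (ofReal_ne_zero.2 (Real.exp_pos t).ne'),
    cpow_def_of_ne_zero (ofReal_ne_zero.2 (Real.exp_pos t).ne'),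
    ← ofReal_log (Real.exp_pos t).le, Real.log_exp, mul_comm (t : ℂ)]

lemma integrable_cexp_smul_comp_exp_iff (f : ℝ → E) (w : ℂ) :
    Integrable (fun t : ℝ => cexp (w * t) • f (Real.exp t)) ↔ MellinConvergent f w := by
  have := integrableOn_image_iff_integrableOn_abs_deriv_smul MeasurableSet.univ
    (fun t _ => (Real.hasDerivAt_exp t).hasDerivWithinAt) Real.exp_injective.injOn
    (fun v : ℝ => (v : ℂ) ^ (w - 1) • f v)
  rw [image_univ, Real.range_exp, integrableOn_univ] at this
  simp only [exp_smul_cpow_exp_smul] at this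
  exact this.symm

lemma integral_cexp_smul_comp_exp (f : ℝ → E) (w : ℂ) :
    ∫ t : ℝ, cexp (w * t) • f (Real.exp t) = mellin f w := by
  have := integral_image_eq_integral_abs_deriv_smul MeasurableSet.univ
    (fun t _ => (Real.hasDerivAt_exp t).hasDerivWithinAt) Real.exp_injective.injOn
    (fun v : ℝ => (v : ℂ) ^ (w - 1) • f v)
  rw [image_univ, Real.range_exp, setIntegral_univ] at this
  simp only [exp_smul_cpow_exp_smul] at this
  exact this.symm

end Macdonald

lemma mellinConvergent_cexp_neg_mul_add_inv (w : ℂ) {p : ℝ} (hp : 0 < p) :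
    MellinConvergent (fun v : ℝ => cexp (-(p * (v + (v : ℂ)⁻¹)))) w := by
  have hcont : ContinuousOn (fun v : ℝ => cexp (-(p * (v + (v : ℂ)⁻¹)))) (Ioi 0) := by
    refine continuous_exp.comp_continuousOn ?_
    have : ContinuousOn (fun v : ℝ => (v : ℂ)⁻¹) (Ioi 0) :=
      continuous_ofReal.continuousOn.inv₀ fun v hv => ofReal_ne_zero.2 (ne_of_gt hv)
    fun_prop
  have hnorm (v : ℝ) : ‖cexp (-(p * (v + (v : ℂ)⁻¹)))‖ =
      Real.exp (-p * v) * Real.exp (-p * v⁻¹) := by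
    rw [← Real.exp_add, norm_exp, ← ofReal_inv, ← ofReal_add, ← ofReal_mul, ← ofReal_neg, ofReal_re]
    ring_nf
  have hle {v : ℝ} (hv : 0 < v) : Real.exp (-p * v) ≤ 1 :=
    Real.exp_le_one_iff.2 (by nlinarith)
  refine mellinConvergent_of_isBigO_rpow_exp hp
    (hcont.locallyIntegrableOn measurableSet_Ioi) (.of_bound 1 ?_) (b := w.re - 1) ?_ (by linarith)
  · filter_upwards [eventually_gt_atTop 0] with v hv
    rw [hnorm, one_mul, Real.norm_of_nonneg (Real.exp_pos _).le]
    exact mul_le_of_le_one_right (Real.exp_pos _).le (hle (inv_pos.2 hv))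
  · have hdecay := ((isLittleO_exp_neg_mul_rpow_atTop hp (w.re - 1)).comp_tendsto
      tendsto_inv_nhdsGT_zero).isBigO
    refine .trans (.of_bound 1 ?_) (hdecay.congr' (g₂ := fun v => v ^ (-(w.re - 1))) .rfl ?_)
    · filter_upwards [self_mem_nhdsWithin] with v hv
      rw [hnorm, one_mul, Function.comp_apply, Real.norm_of_nonneg (Real.exp_pos _).le]
      exact mul_le_of_le_one_left (Real.exp_pos _).le (hle hv)
    · filter_upwards [self_mem_nhdsWithin] with v hv
      rw [Function.comp_apply, Real.inv_rpow (le_of_lt hv), Real.rpow_neg (le_of_lt hv)]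

lemma cexp_neg_mul_exp_add_inv (p t : ℝ) :
    cexp (-(p * (Real.exp t + (Real.exp t : ℂ)⁻¹))) = cexp (-((2 * p : ℝ) : ℂ) * Real.cosh t) := by
  rw [Real.cosh_eq, Real.exp_neg]
  push_cast
  ring_nf

lemma integrable_cexp_mul_cexp_neg_mul_cosh (w : ℂ) {x : ℝ} (hx : 0 < x) :
    Integrable fun t : ℝ => cexp (w * t) * cexp (-(x : ℂ) * Real.cosh t) := by
  have := (integrable_cexp_smul_comp_exp_iff _ w).2
    (mellinConvergent_cexp_neg_mul_add_inv w (half_pos hx))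
  simpa only [cexp_neg_mul_exp_add_inv, mul_div_cancel₀ x two_ne_zero, smul_eq_mul] using this

lemma two_mul_macdonaldK (w : ℂ) {x : ℝ} (hx : 0 < x) :
    2 * macdonaldK w x = ∫ t : ℝ, cexp (w * t) * cexp (-(x : ℂ) * Real.cosh t) := by
  have hint := integrable_cexp_mul_cexp_neg_mul_cosh w hx
  rw [← intervalIntegral.integral_Iic_add_Ioi (b := 0) hint.integrableOn hint.integrableOn,
    ← neg_zero, ← integral_comp_neg_Ioi, neg_zero,
    ← integral_add hint.comp_neg.integrableOn hint.integrableOn, macdonaldK, ← integral_const_mul]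
  refine setIntegral_congr_fun measurableSet_Ioi fun t _ => ?_
  simp only [Complex.cosh, Real.cosh_neg, ofReal_neg, mul_neg]
  ring

lemma extendedGamma_sq (w : ℂ) {p : ℝ} (hp : 0 < p) :
    extendedGamma w (p ^ 2) = (p : ℂ) ^ w * (2 * macdonaldK w (2 * p)) := by
  have hp' : (p : ℂ) ≠ 0 := ofReal_ne_zero.2 hp.ne'
  have hscale := mellin_comp_mul_left (fun t : ℝ => cexp (-t - (p ^ 2 : ℝ) / t)) w hp
  have hpt : (fun v : ℝ => cexp (-((p * v : ℝ) : ℂ) - (p ^ 2 : ℝ) / ((p * v : ℝ) : ℂ))) =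
      fun v : ℝ => cexp (-(p * (v + (v : ℂ)⁻¹))) := by
    funext v
    rcases eq_or_ne v 0 with rfl | _
    · simp
    · push_cast
      field_simp
      ring_nf
  rw [hpt, ← integral_cexp_smul_comp_exp] at hscale
  simp only [cexp_neg_mul_exp_add_inv, smul_eq_mul] at hscale
  rw [two_mul_macdonaldK w (by positivity), hscale, cpow_neg,
    mul_inv_cancel_left₀ (by simp [hp'])]
  rfl

lemma macdonaldK_neg (w : ℂ) (y : ℝ) : macdonaldK (-w) y = macdonaldK w y := by
  simp [macdonaldK]

lemma mellinConvergent_cexp_neg_sub_div {c : ℂ} (hc : 0 < c.re) {y : ℝ} (hy : 0 ≤ y) :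
    MellinConvergent (fun t : ℝ => cexp (-t - y / t)) c := by
  have hG := mellinConvergent_cexp_neg hc
  refine Integrable.mono hG (Measurable.aestronglyMeasurable (by fun_prop)) ?_
  filter_upwards [ae_restrict_mem measurableSet_Ioi] with t ht
  have : 0 ≤ y / t := div_nonneg hy (le_of_lt ht)
  rw [norm_smul, norm_smul, norm_exp, norm_exp]
  refine mul_le_mul_of_nonneg_left (Real.exp_le_exp.2 ?_) (norm_nonneg _)
  rw [sub_re, ← ofReal_div, ofReal_re]
  linarith

lemma Gamma_sub_extendedGamma {c : ℂ} (hc : 0 < c.re) {y : ℝ} (hy : 0 ≤ y) :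
    Gamma c - extendedGamma c y =
      ∫ t in Ioi (0 : ℝ), (t : ℂ) ^ (c - 1) * (cexp (-t) - cexp (-t - y / t)) := by
  have hG := hasMellin_cexp_neg hc
  rw [← hG.2]
  exact (hasMellin_sub hG.1 (mellinConvergent_cexp_neg_sub_div hc hy)).2.symm

/-! ### The triple integral -/

/-- The integrand, as a function of `(y, B, u)`, of the triple integral which equals
`Γ(a) Γ(b) Γ(c)` when `a + b + c = 0`. The factor with `B` is the integrand of
`extendedGamma (b - a) y`, the one with `u` that of `Gamma c - extendedGamma c y`. -/
noncomputable def tripleGammaKernel (a b c : ℂ) (p : ℝ × ℝ × ℝ) : ℂ :=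
  (p.1 : ℂ) ^ (a - 1) *
    (((p.2.1 : ℂ) ^ (b - a - 1) * cexp (-p.2.1 - p.1 / p.2.1)) *
      ((p.2.2 : ℂ) ^ (c - 1) * (cexp (-p.2.2) - cexp (-p.2.2 - p.1 / p.2.2))))

lemma measurable_tripleGammaKernel (a b c : ℂ) : Measurable (tripleGammaKernel a b c) := by
  unfold tripleGammaKernel
  fun_prop

lemma integrable_rpow_mul_exp_neg_sub_div {s t : ℝ} (hs : 0 < s) (hst : 0 < s + t) :
    Integrable (fun q : ℝ × ℝ => q.1 ^ (s - 1) * (q.2 ^ (t - 1) * Real.exp (-q.2 - q.1 / q.2)))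
      (μ₊.prod μ₊) := by
  have hsplit (y B : ℝ) : y ^ (s - 1) * (B ^ (t - 1) * Real.exp (-B - y / B)) =
      B ^ (t - 1) * Real.exp (-B) * (y ^ (s - 1) * Real.exp (-(B⁻¹ * y))) := by
    rw [show -B - y / B = -B + -(B⁻¹ * y) by ring, Real.exp_add]
    ring
  refine (integrable_prod_iff' (Measurable.aestronglyMeasurable (by fun_prop))).2 ⟨?_, ?_⟩
  · filter_upwards [ae_restrict_mem measurableSet_Ioi] with B hB
    simp only [hsplit]
    have := integrableOn_rpow_mul_exp_neg_mul_rpow (s := s - 1) (by linarith) one_pos (inv_pos.2 hB)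
    simp only [Real.rpow_one, neg_mul] at this
    exact this.integrable.const_mul _
  · refine IntegrableOn.congr_fun ((Real.GammaIntegral_convergent hst).const_mul (Real.Gamma s)) ?_
      measurableSet_Ioi
    intro B (hB : 0 < B)
    have hinner : ∫ y in Ioi (0 : ℝ), ‖y ^ (s - 1) * (B ^ (t - 1) * Real.exp (-B - y / B))‖ =
        B ^ (t - 1) * Real.exp (-B) * ((1 / B⁻¹) ^ s * Real.Gamma s) := by
      rw [← Real.integral_rpow_mul_exp_neg_mul_Ioi hs (inv_pos.2 hB), ← integral_const_mul]
      refine setIntegral_congr_fun measurableSet_Ioi fun y (hy : 0 < y) => ?_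
      rw [Real.norm_of_nonneg (by positivity), hsplit]
    simp only [hinner, one_div, inv_inv, show s + t - 1 = t - 1 + s by ring, Real.rpow_add hB]
    ring

lemma norm_tripleGammaKernel_le {a b c : ℂ} {θ : ℝ} (hθ : 0 ≤ θ) (hθ1 : θ ≤ 1) {y B u : ℝ}
    (hy : 0 < y) (hB : 0 < B) (hu : 0 < u) :
    ‖tripleGammaKernel a b c (y, B, u)‖ ≤
      (y ^ (a.re + θ - 1) * (B ^ ((b - a).re - 1) * Real.exp (-B - y / B))) *
        (Real.exp (-u) * u ^ (c.re - θ - 1)) := by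
  have hdiff : ‖cexp (-u) - cexp (-u - y / u)‖ ≤ Real.exp (-u) * (y / u) ^ θ := by
    have : cexp (-u) - cexp (-u - y / u) = -(cexp (-u) * (cexp (-(y / u : ℝ)) - 1)) := by
      rw [mul_sub, ← Complex.exp_add]; push_cast; ring_nf
    rw [this, norm_neg, norm_mul, norm_exp, ← ofReal_neg, ofReal_re]
    gcongr
    exact norm_cexp_neg_sub_one_le_rpow hθ hθ1 (div_pos hy hu)
  have hnorm : ‖cexp (-B - y / B)‖ = Real.exp (-B - y / B) := by
    rw [norm_exp, ← ofReal_div, ← ofReal_neg, ← ofReal_sub, ofReal_re]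
  simp only [tripleGammaKernel, norm_mul, norm_cpow_eq_rpow_re_of_pos, hy, hB, hu, hnorm,
    sub_re, one_re]
  refine (mul_le_mul_of_nonneg_left (mul_le_mul_of_nonneg_left
    (mul_le_mul_of_nonneg_left hdiff (by positivity)) (by positivity)) (by positivity)).trans_eq ?_
  rw [Real.div_rpow hy.le hu.le, show a.re + θ - 1 = a.re - 1 + θ by ring, Real.rpow_add hy,
    show c.re - θ - 1 = c.re - 1 - θ by ring, Real.rpow_sub hu (c.re - 1)]
  ring

lemma integrable_tripleGammaKernel {a b c : ℂ} (ha : -1 < a.re) (hb : -1 < b.re) (hc : 0 < c.re)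
    (hac : 0 < (a + c).re) (hbc : 0 < (b + c).re) :
    Integrable (tripleGammaKernel a b c) (μ₊.prod (μ₊.prod μ₊)) := by
  rw [add_re] at hac hbc
  -- Estimating `1 - e^(-y/u)` by `(y/u)^θ` splits off the factor with `u`; the bounds on `θ` say
  -- that the three Euler integrals that result converge.
  obtain ⟨θ, hθ, hθ'⟩ : ∃ θ, max 0 (max (-a.re) (-b.re)) < θ ∧ θ < min 1 c.re :=
    exists_between (by simp only [max_lt_iff, lt_min_iff]; constructorm* _ ∧ _ <;> linarith)
  simp only [max_lt_iff, lt_min_iff] at hθ hθ'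
  have hBy := integrable_rpow_mul_exp_neg_sub_div (s := a.re + θ) (t := (b - a).re)
    (by linarith) (by rw [sub_re]; linarith)
  have hu := Real.GammaIntegral_convergent (s := c.re - θ) (by linarith)
  have hmajorant := (measurePreserving_prodAssoc μ₊ μ₊ μ₊).symm.integrable_comp_of_integrable
    (hBy.mul_prod hu.integrable)
  refine hmajorant.mono' (measurable_tripleGammaKernel a b c).aestronglyMeasurable ?_
  have hpos : ∀ᵐ p : ℝ × ℝ × ℝ ∂(μ₊.prod (μ₊.prod μ₊)), 0 < p.1 ∧ 0 < p.2.1 ∧ 0 < p.2.2 := by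
    simp only [Measure.prod_restrict]
    exact ae_restrict_mem (measurableSet_Ioi.prod (measurableSet_Ioi.prod measurableSet_Ioi))
  filter_upwards [hpos] with p ⟨hy, hB, hu⟩
  exact norm_tripleGammaKernel_le hθ.1.le hθ'.1.le hy hB hu

lemma integral_tripleGammaKernel_snd (a b : ℂ) {c : ℂ} (hc : 0 < c.re) {y : ℝ} (hy : 0 ≤ y) :
    ∫ q, tripleGammaKernel a b c (y, q) ∂(μ₊.prod μ₊) =
      (y : ℂ) ^ (a - 1) * (extendedGamma (b - a) y * (Gamma c - extendedGamma c y)) := by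
  rw [Gamma_sub_extendedGamma hc hy]
  simp only [tripleGammaKernel, integral_const_mul]
  congr 1
  exact integral_prod_mul (fun B : ℝ => (B : ℂ) ^ (b - a - 1) * cexp (-B - y / B))
    (fun u : ℝ => (u : ℂ) ^ (c - 1) * (cexp (-u) - cexp (-u - y / u)))

lemma inv_add_inv_cpow_neg (a : ℂ) {B u : ℝ} (hB : 0 < B) (hu : 0 < u) :
    ((B⁻¹ + u⁻¹ : ℝ) : ℂ) ^ (-a) = (1 + B / u : ℂ) ^ (-a) * (B : ℂ) ^ a := by
  rw [show B⁻¹ + u⁻¹ = (1 + B / u) * B⁻¹ by field_simp, ofReal_mul,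
    mul_cpow_ofReal_nonneg (by positivity) (by positivity), ofReal_inv_cpow_neg hB.le]
  push_cast
  rfl

lemma integral_tripleGammaKernel_fst {a : ℂ} (ha : -1 < a.re) (ha0 : a.re < 0) (b c : ℂ) {B u : ℝ}
    (hB : 0 < B) (hu : 0 < u) :
    ∫ y in Ioi (0 : ℝ), tripleGammaKernel a b c (y, B, u) =
      Gamma a * ((B : ℂ) ^ (b - 1) * (u : ℂ) ^ (c - 1) * cexp (-(B + u)) *
        (1 - (1 + B / u : ℂ) ^ (-a))) := by
  obtain ⟨-, hmellin⟩ := hasMellin_cexp_neg_mul_sub_cexp_neg_mul ha ha0 (p := B⁻¹)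
    (q := B⁻¹ + u⁻¹) (by positivity) (by positivity)
  have hpt (y : ℝ) : tripleGammaKernel a b c (y, B, u) =
      (B : ℂ) ^ (b - a - 1) * (u : ℂ) ^ (c - 1) * cexp (-(B + u)) *
        ((y : ℂ) ^ (a - 1) • (cexp (-((B⁻¹ : ℝ) * y)) - cexp (-((B⁻¹ + u⁻¹ : ℝ) * y)))) := by
    have hminuend : cexp (-B - y / B) * cexp (-u) = cexp (-(B + u)) * cexp (-((B⁻¹ : ℝ) * y)) := by
      simp only [← Complex.exp_add]; push_cast; ring_nf
    have hsubtrahend : cexp (-B - y / B) * cexp (-u - y / u) =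
        cexp (-(B + u)) * cexp (-((B⁻¹ + u⁻¹ : ℝ) * y)) := by
      simp only [← Complex.exp_add]; push_cast; ring_nf
    rw [tripleGammaKernel, smul_eq_mul]
    linear_combination (y : ℂ) ^ (a - 1) * (B : ℂ) ^ (b - a - 1) * (u : ℂ) ^ (c - 1) *
      (hminuend - hsubtrahend)
  have hpow : (B : ℂ) ^ (b - 1) = (B : ℂ) ^ (b - a - 1) * (B : ℂ) ^ a := by
    rw [← cpow_add _ _ (ofReal_ne_zero.2 hB.ne')]; ring_nf
  simp only [hpt, integral_const_mul]
  rw [← mellin, hmellin, ofReal_inv_cpow_neg hB.le, inv_add_inv_cpow_neg a hB hu, hpow]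
  ring

lemma integral_smul_integral_tripleGammaKernel {a : ℂ} (ha : -1 < a.re) (ha0 : a.re < 0) (b : ℂ)
    {k : ℝ} (hk : 0 < k) :
    ∫ u in Ioi (0 : ℝ), u • ∫ y in Ioi (0 : ℝ), tripleGammaKernel a b (-a - b) (y, u * k, u) =
      (k : ℂ) ^ (b - 1) • (Gamma a * (Gamma (-a) * ((1 + k : ℂ) ^ (- -a) - 1))) := by
  obtain ⟨-, hmellin⟩ := hasMellin_cexp_neg_mul (s := -a) (by simpa) (by linarith : 0 < 1 + k)
  have hpt : EqOn
      (fun u : ℝ => u • ∫ y in Ioi (0 : ℝ), tripleGammaKernel a b (-a - b) (y, u * k, u))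
      (fun u : ℝ => Gamma a * (k : ℂ) ^ (b - 1) * (1 - (1 + k : ℂ) ^ (-a)) *
        ((u : ℂ) ^ (-a - 1) • cexp (-((1 + k : ℝ) * u)))) (Ioi 0) := by
    intro u (hu : 0 < u)
    have hexp : cexp (-((u * k : ℝ) + u)) = cexp (-((1 + k : ℝ) * u)) := by
      push_cast; ring_nf
    have hdiv : ((u * k : ℝ) : ℂ) / u = k := by
      rw [ofReal_mul, mul_div_cancel_left₀ _ (ofReal_ne_zero.2 hu.ne')]
    simp only [integral_tripleGammaKernel_fst ha ha0 b _ (mul_pos hu hk) hu, real_smul, smul_eq_mul,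
      hexp, hdiv]
    linear_combination Gamma a * cexp (-((1 + k : ℝ) * u)) * (1 - (1 + k : ℂ) ^ (-a)) *
      ofReal_mul_cpow_mul_cpow hu hk b (-a)
  have hk' : (1 + k : ℂ) ≠ 0 := by exact_mod_cast (by linarith : 1 + k ≠ 0)
  have hcancel : (1 + k : ℂ) ^ (-a) * (1 + k : ℂ) ^ a = 1 := by
    rw [← cpow_add _ _ hk', neg_add_cancel, cpow_zero]
  rw [setIntegral_congr_fun measurableSet_Ioi hpt, integral_const_mul, ← mellin, hmellin,
    smul_eq_mul, neg_neg, ofReal_add, ofReal_one]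
  linear_combination (-Gamma a * Gamma (-a) * (k : ℂ) ^ (b - 1)) * hcancel

lemma hasMellin_extendedGamma_mul_Gamma_sub {a b : ℂ} (ha : -1 < a.re) (ha0 : a.re < 0)
    (hb : -1 < b.re) (hb0 : b.re < 0) :
    HasMellin
      (fun y => extendedGamma (b - a) y * (Gamma (-a - b) - extendedGamma (-a - b) y)) a
      (Gamma a * (Gamma b * Gamma (-a - b))) := by
  have hc : 0 < (-a - b).re := by rw [sub_re, neg_re]; linarith
  have hint := integrable_tripleGammaKernel (a := a) (b := b) (c := -a - b) ha hb hc
    (by rw [add_re, sub_re, neg_re]; linarith) (by simpa)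
  have hinner : EqOn (fun y => ∫ q, tripleGammaKernel a b (-a - b) (y, q) ∂(μ₊.prod μ₊))
      (fun y : ℝ => (y : ℂ) ^ (a - 1) •
        (extendedGamma (b - a) y * (Gamma (-a - b) - extendedGamma (-a - b) y))) (Ioi 0) :=
    fun y hy => integral_tripleGammaKernel_snd a b hc (le_of_lt hy)
  have hratio := hasMellin_of_integral_ratio
    (measurable_tripleGammaKernel a b (-a - b)).stronglyMeasurable.integral_prod_left'
    hint.integral_prod_right fun k hk => integral_smul_integral_tripleGammaKernel ha ha0 b hk
  have hbeta := hasMellin_one_add_cpow_neg_sub_one hb hb0 (s := -a) (by simpa)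
  refine ⟨IntegrableOn.congr_fun hint.integral_prod_left hinner measurableSet_Ioi, ?_⟩
  rw [mellin, ← setIntegral_congr_fun measurableSet_Ioi hinner, ← integral_prod _ hint,
    integral_prod_symm _ hint, ← hratio.2, ← hbeta.2]
  exact (hasMellin_const_smul hbeta.1 (Gamma a)).2

lemma hasMellin_macdonaldK_mul_Gamma_sub {a b : ℂ} (ha : -1 < a.re) (ha0 : a.re < 0)
    (hb : -1 < b.re) (hb0 : b.re < 0) :
    HasMellin
      (fun x : ℝ => (x / 2 : ℂ) ^ (b - a) * (2 * macdonaldK (b - a) x) *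
        (Gamma (-a - b) - (x / 2 : ℂ) ^ (-a - b) * (2 * macdonaldK (-a - b) x)))
      (2 * a) ((2 : ℂ) ^ (2 * a) * ((2 : ℝ)⁻¹ * (Gamma a * (Gamma b * Gamma (-a - b))))) := by
  refine hasMellin_congr (hasMellin_comp_div_two_sq
    (hasMellin_extendedGamma_mul_Gamma_sub ha ha0 hb hb0)) fun x hx => ?_
  simp only [extendedGamma_sq _ (half_pos hx), mul_div_cancel₀ x two_ne_zero, ofReal_div,
    ofReal_ofNat]

lemma four_mul_div_Gamma_one_sub {z : ℂ} (hz : z ≠ 0) :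
    4 * z / Gamma (1 - 2 * z) = -2 / Gamma (-(2 * z)) := by
  rw [sub_eq_neg_add, Gamma_add_one _ (by simpa)]
  field_simp
  ring

lemma cpow_mul_macdonaldK_mul_Gamma_sub {z : ℂ} (s : ℂ) (hz : z ≠ 0) (hΓ : Gamma (-(2 * z)) ≠ 0)
    {x : ℝ} (hx : 0 < x) :
    (x : ℂ) ^ (2 * (z + I * s) - 1) • ((x / 2 : ℂ) ^ (-(2 * I * s)) *
      (2 * macdonaldK (-(2 * I * s)) x) *
        (Gamma (-(2 * z)) - (x / 2 : ℂ) ^ (-(2 * z)) * (2 * macdonaldK (-(2 * z)) x))) =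
      2 * (2 : ℂ) ^ (2 * (z + I * s)) * Gamma (-(2 * z)) *
        (((x : ℂ) / 2) ^ (2 * z) * macdonaldK (2 * I * s) x *
          (1 + (2 / (x : ℂ)) ^ (2 * z) * (4 * z / Gamma (1 - 2 * z)) * macdonaldK (2 * z) x) *
            (1 / (x : ℂ))) := by
  have hx' : (x : ℂ) ≠ 0 := ofReal_ne_zero.2 hx.ne'
  have hscale : (x : ℂ) ^ (2 * (z + I * s) - 1) = (2 : ℂ) ^ (2 * (z + I * s)) *
      ((x / 2 : ℂ) ^ (2 * z) * (x / 2 : ℂ) ^ (2 * I * s)) / x := by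
    have hmul := mul_cpow_ofReal_nonneg zero_le_two (half_pos hx).le (2 * (z + I * s))
    rw [← ofReal_mul, mul_div_cancel₀ x two_ne_zero] at hmul
    push_cast at hmul
    rw [cpow_sub _ _ hx', cpow_one, hmul, ← cpow_add _ _ (by simp [hx.ne'])]
    ring_nf
  have hinv : (2 / x : ℂ) ^ (2 * z) = ((x / 2 : ℂ) ^ (2 * z))⁻¹ := by
    rw [← inv_div]
    exact_mod_cast inv_cpow_ofReal_nonneg (half_pos hx).le (2 * z)
  have hne (w : ℂ) : (x / 2 : ℂ) ^ w ≠ 0 := by simp [cpow_eq_zero_iff, hx']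
  rw [smul_eq_mul, hscale, hinv, four_mul_div_Gamma_one_sub hz, macdonaldK_neg, macdonaldK_neg,
    cpow_neg, cpow_neg]
  have := hne (2 * z)
  have := hne (2 * I * s)
  field_simp
  ring

theorem stmt9_general (z s : ℂ) (hz1 : -1 < z.re - |s.im|) (hz2 : z.re + |s.im| < 0) :
    IntegrableOn
      (fun x : ℝ =>
        ((x : ℂ) / 2) ^ (2 * z) * macdonaldK (2 * I * s) x *
          (1 + (2 / (x : ℂ)) ^ (2 * z) * (4 * z / Gamma (1 - 2 * z)) * macdonaldK (2 * z) x) *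
            (1 / (x : ℂ)))
      (Ioi 0) ∧
    Gamma (z + I * s) * Gamma (z - I * s) =
      4 * ∫ x in Ioi (0 : ℝ),
        ((x : ℂ) / 2) ^ (2 * z) * macdonaldK (2 * I * s) x *
          (1 + (2 / (x : ℂ)) ^ (2 * z) * (4 * z / Gamma (1 - 2 * z)) * macdonaldK (2 * z) x) *
            (1 / (x : ℂ)) := by
  have him := abs_le.1 (le_refl |s.im|)
  have hre : (I * s).re = -s.im := by simp
  obtain ⟨hconv, hval⟩ := hasMellin_macdonaldK_mul_Gamma_sub (a := z + I * s) (b := z - I * s)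
    (by rw [add_re]; linarith) (by rw [add_re]; linarith)
    (by rw [sub_re]; linarith) (by rw [sub_re]; linarith)
  rw [show z - I * s - (z + I * s) = -(2 * I * s) by ring,
    show -(z + I * s) - (z - I * s) = -(2 * z) by ring] at hconv hval
  have hc : 0 < (-(2 * z)).re := by
    simpa using (by linarith : 2 * z.re < 0)
  have hz : z ≠ 0 := by rintro rfl; simp at hc
  have hΓ := Gamma_ne_zero_of_re_pos hc
  have hpt := fun x (hx : x ∈ Ioi (0 : ℝ)) => cpow_mul_macdonaldK_mul_Gamma_sub s hz hΓ hx
  have htwo : (2 : ℂ) ^ (2 * (z + I * s)) ≠ 0 := by simp [cpow_eq_zero_iff]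
  have hC := mul_ne_zero (mul_ne_zero two_ne_zero htwo) hΓ
  refine ⟨(integrable_const_mul_iff hC.isUnit _).1
    (IntegrableOn.congr_fun hconv hpt measurableSet_Ioi), mul_left_cancel₀ hC ?_⟩
  rw [mellin, setIntegral_congr_fun measurableSet_Ioi hpt, integral_const_mul] at hval
  push_cast at hval
  linear_combination (-4) * hval

/-- For every `z ∈ ℂ` with `−1 < Re z < 0` and every real `s`,
`Γ(z+is)Γ(z−is) = 4 ∫_0^∞ (x/2)^{2z} K_{2is}(x)(1 + (2/x)^{2z}(4z/Γ(1−2z))K_{2z}(x))(1/x) dx`,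
the integral converging absolutely. -/
theorem stmt9 (z : ℂ) (hz1 : -1 < z.re) (hz2 : z.re < 0) (s : ℝ) :
    IntegrableOn
      (fun x : ℝ =>
        ((x : ℂ) / 2) ^ (2 * z) * macdonaldK (2 * Complex.I * (s : ℂ)) x *
          (1 + (2 / (x : ℂ)) ^ (2 * z) * (4 * z / Complex.Gamma (1 - 2 * z)) *
            macdonaldK (2 * z) x) * (1 / (x : ℂ)))
      (Set.Ioi (0 : ℝ)) ∧
    Complex.Gamma (z + Complex.I * (s : ℂ)) * Complex.Gamma (z - Complex.I * (s : ℂ))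
      = 4 * ∫ x in Set.Ioi (0 : ℝ),
          ((x : ℂ) / 2) ^ (2 * z) * macdonaldK (2 * Complex.I * (s : ℂ)) x *
            (1 + (2 / (x : ℂ)) ^ (2 * z) * (4 * z / Complex.Gamma (1 - 2 * z)) *
              macdonaldK (2 * z) x) * (1 / (x : ℂ)) :=
  stmt9_general z s (by simpa) (by simpa)
end

section
/- For every complex number z with Re(z) > 0 and every real s, one has Γ(z+is) Γ(z−is) = 4 ∫_0^∞ (x/2)^{2z} K_{2is}(x) · (1/x) dx, where the integral converges absolutely. -/
open MeasureTheory

/-!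
Write `u = z + is` and `v = z - is`. Inserting the definition of `K_{u-v}` into
`∫_0^∞ (x/2)^{u+v} K_{u-v}(x) dx/x` gives a double integral over `(x, t)`. The integral over `x` is
Euler's integral, equal to `Γ(u+v) (2 cosh t)^{-(u+v)}`. What remains,
`4 ∫_0^∞ cosh((u-v)t) (2 cosh t)^{-(u+v)} dt`, becomes the beta integral
`B(u, v) = Γ(u) Γ(v) / Γ(u+v)` under the logistic substitution `y = e^t / (2 cosh t)`. Fubini's
theorem applies because the `x`-integral of the absolute values is again an Euler integral, with
`u + v` replaced by its real part.
-/

theorem integral_eq_integral_Ioi_add_comp_neg {E : Type*} [NormedAddCommGroup E] [NormedSpace ℝ E]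
    {f : ℝ → E} (hf : Integrable f) : ∫ t, f t = ∫ t in Set.Ioi 0, (f t + f (-t)) := by
  have reflect : ∫ t in Set.Iic 0, f t = ∫ t in Set.Ioi 0, f (-t) := by
    rw [integral_comp_neg_Ioi, neg_zero]
  rw [integral_add hf.integrableOn hf.comp_neg.integrableOn, ← reflect, add_comm,
    intervalIntegral.integral_Iic_add_Ioi hf.integrableOn hf.integrableOn]

theorem sigmoid_two_mul (t : ℝ) : Real.sigmoid (2 * t) = Real.exp t / (2 * Real.cosh t) := by
  rw [Real.sigmoid_def, Real.cosh_eq, two_mul t, neg_add, Real.exp_add, Real.exp_neg]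
  field_simp

theorem ofReal_exp_cpow (t : ℝ) (u : ℂ) : (Real.exp t : ℂ) ^ u = Complex.exp (t * u) := by
  rw [Complex.cpow_def_of_ne_zero (Complex.ofReal_ne_zero.2 (Real.exp_ne_zero t)),
    ← Complex.ofReal_log (Real.exp_pos t).le, Real.log_exp]

theorem sigmoid_two_mul_cpow (u : ℂ) (t : ℝ) :
    (Real.sigmoid (2 * t) : ℂ) ^ u =
      Complex.exp (t * u) * ((2 * Real.cosh t : ℝ) : ℂ) ^ (-u) := by
  have two_cosh_nonneg : 0 ≤ 2 * Real.cosh t := by have := Real.cosh_pos t; positivity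
  rw [sigmoid_two_mul, Complex.ofReal_div,
    Complex.div_cpow_ofReal_nonneg (Real.exp_pos t).le two_cosh_nonneg, ofReal_exp_cpow,
    Complex.cpow_neg, div_eq_mul_inv]

theorem sigmoid_two_mul_cpow_mul_sigmoid_neg_cpow (u v : ℂ) (t : ℝ) :
    (Real.sigmoid (2 * t) : ℂ) ^ u * (Real.sigmoid (-(2 * t)) : ℂ) ^ v =
      Complex.exp ((u - v) * t) * ((2 * Real.cosh t : ℝ) : ℂ) ^ (-(u + v)) := by
  have two_cosh_ne_zero : ((2 * Real.cosh t : ℝ) : ℂ) ≠ 0 :=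
    Complex.ofReal_ne_zero.2 (mul_pos two_pos (Real.cosh_pos t)).ne'
  have exp_eq : Complex.exp ((u - v) * t) =
      Complex.exp (t * u) * Complex.exp ((-t : ℝ) * v) := by
    rw [← Complex.exp_add]
    push_cast
    ring_nf
  rw [← mul_neg, sigmoid_two_mul_cpow, sigmoid_two_mul_cpow, Real.cosh_neg, exp_eq, neg_add,
    Complex.cpow_add _ _ two_cosh_ne_zero]
  ring

theorem abs_deriv_sigmoid_smul_betaIntegrand (u v : ℂ) (t : ℝ) :
    |Real.sigmoid t * (1 - Real.sigmoid t)| •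
        ((Real.sigmoid t : ℂ) ^ (u - 1) * (1 - (Real.sigmoid t : ℂ)) ^ (v - 1)) =
      (Real.sigmoid t : ℂ) ^ u * (Real.sigmoid (-t) : ℂ) ^ v := by
  have one_sub_eq : 1 - (Real.sigmoid t : ℂ) = (Real.sigmoid (-t) : ℂ) := by
    rw [Real.sigmoid_neg, Complex.ofReal_sub, Complex.ofReal_one]
  have sigmoid_ne_zero (r : ℝ) : (Real.sigmoid r : ℂ) ≠ 0 :=
    Complex.ofReal_ne_zero.2 (Real.sigmoid_pos r).ne'
  rw [one_sub_eq, ← Real.sigmoid_neg,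
    abs_of_pos (mul_pos (Real.sigmoid_pos t) (Real.sigmoid_pos (-t))), Complex.real_smul,
    Complex.ofReal_mul, Complex.cpow_sub _ _ (sigmoid_ne_zero t),
    Complex.cpow_sub _ _ (sigmoid_ne_zero (-t)), Complex.cpow_one, Complex.cpow_one]
  field_simp [sigmoid_ne_zero]

theorem betaIntegral_eq_integral_sigmoid (u v : ℂ) :
    Complex.betaIntegral u v =
      ∫ t : ℝ, (Real.sigmoid t : ℂ) ^ u * (Real.sigmoid (-t) : ℂ) ^ v := by
  rw [Complex.betaIntegral, intervalIntegral.integral_of_le zero_le_one,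
    integral_Ioc_eq_integral_Ioo, ← Real.range_sigmoid, ← Set.image_univ,
    integral_image_eq_integral_abs_deriv_smul MeasurableSet.univ
      (fun t _ => (Real.hasDerivAt_sigmoid t).hasDerivWithinAt) Real.sigmoid_injective.injOn,
    setIntegral_univ]
  simp only [abs_deriv_sigmoid_smul_betaIntegrand]

theorem integrable_sigmoid_cpow_mul_sigmoid_neg_cpow {u v : ℂ} (hu : 0 < u.re) (hv : 0 < v.re) :
    Integrable fun t : ℝ => (Real.sigmoid t : ℂ) ^ u * (Real.sigmoid (-t) : ℂ) ^ v := by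
  have convergent := Complex.betaIntegral_convergent hu hv
  rw [intervalIntegrable_iff_integrableOn_Ioo_of_le zero_le_one, ← Real.range_sigmoid,
    ← Set.image_univ, integrableOn_image_iff_integrableOn_abs_deriv_smul MeasurableSet.univ
      (fun t _ => (Real.hasDerivAt_sigmoid t).hasDerivWithinAt) Real.sigmoid_injective.injOn,
    integrableOn_univ] at convergent
  simpa only [abs_deriv_sigmoid_smul_betaIntegrand] using convergent

theorem betaIntegral_eq_integral_exp_mul_two_cosh_cpow (u v : ℂ) :
    Complex.betaIntegral u v =
      2 * ∫ t : ℝ, Complex.exp ((u - v) * t) * ((2 * Real.cosh t : ℝ) : ℂ) ^ (-(u + v)) := by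
  simp only [← sigmoid_two_mul_cpow_mul_sigmoid_neg_cpow]
  rw [Measure.integral_comp_mul_left
      (fun t : ℝ => (Real.sigmoid t : ℂ) ^ u * (Real.sigmoid (-t) : ℂ) ^ v) 2,
    ← betaIntegral_eq_integral_sigmoid, abs_of_pos (by positivity), Complex.real_smul]
  push_cast
  ring

theorem integrable_exp_mul_two_cosh_cpow {u v : ℂ} (hu : 0 < u.re) (hv : 0 < v.re) :
    Integrable fun t : ℝ =>
      Complex.exp ((u - v) * t) * ((2 * Real.cosh t : ℝ) : ℂ) ^ (-(u + v)) := by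
  simpa only [sigmoid_two_mul_cpow_mul_sigmoid_neg_cpow] using
    (integrable_sigmoid_cpow_mul_sigmoid_neg_cpow hu hv).comp_mul_left' two_ne_zero

theorem exp_mul_add_exp_mul_neg_mul_two_cosh_cpow (a p : ℂ) (t : ℝ) :
    Complex.exp (a * t) * ((2 * Real.cosh t : ℝ) : ℂ) ^ p +
        Complex.exp (a * (-t : ℝ)) * ((2 * Real.cosh (-t) : ℝ) : ℂ) ^ p =
      2 * (Complex.cosh (a * t) * ((2 * Real.cosh t : ℝ) : ℂ) ^ p) := by
  rw [Real.cosh_neg, Complex.cosh, Complex.ofReal_neg, mul_neg]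
  ring

theorem integrable_cosh_mul_two_cosh_cpow {u v : ℂ} (hu : 0 < u.re) (hv : 0 < v.re) :
    Integrable fun t : ℝ =>
      Complex.cosh ((u - v) * t) * ((2 * Real.cosh t : ℝ) : ℂ) ^ (-(u + v)) := by
  have integrable_exp := integrable_exp_mul_two_cosh_cpow hu hv
  have integrable_sum := integrable_exp.add integrable_exp.comp_neg
  refine (integrable_sum.const_mul (1 / 2)).congr (.of_forall fun t => ?_)
  simp only [Pi.add_apply, exp_mul_add_exp_mul_neg_mul_two_cosh_cpow]
  ring

theorem betaIntegral_eq_integral_cosh_mul_two_cosh_cpow {u v : ℂ} (hu : 0 < u.re)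
    (hv : 0 < v.re) :
    Complex.betaIntegral u v = 4 * ∫ t in Set.Ioi (0 : ℝ),
      Complex.cosh ((u - v) * t) * ((2 * Real.cosh t : ℝ) : ℂ) ^ (-(u + v)) := by
  rw [betaIntegral_eq_integral_exp_mul_two_cosh_cpow,
    integral_eq_integral_Ioi_add_comp_neg (integrable_exp_mul_two_cosh_cpow hu hv)]
  simp only [exp_mul_add_exp_mul_neg_mul_two_cosh_cpow]
  rw [integral_const_mul]
  ring

/-- The integrand of Euler's integral for `Γ(p) (2r)^{-p}`, normalized so that it is the part of
the integrand of `∫_0^∞ (x/2)^p K_w(x) dx/x` depending on `x`, with `r` in the place of `cosh t`. -/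
noncomputable def eulerKernel (p : ℂ) (r x : ℝ) : ℂ :=
  ((x : ℂ) / 2) ^ p * Complex.exp (-(x : ℂ) * r) * (1 / (x : ℂ))

theorem eulerKernel_eq_GammaIntegrand (p : ℂ) {r x : ℝ} (hr : 0 < r) (hx : 0 < x) :
    eulerKernel p r x = ((2 * r : ℝ) : ℂ) ^ (-p) * r *
      ((Real.exp (-(r * x)) : ℂ) * ((r * x : ℝ) : ℂ) ^ (p - 1)) := by
  have x_ne_zero : (x : ℂ) ≠ 0 := Complex.ofReal_ne_zero.2 hx.ne'
  have r_ne_zero : (r : ℂ) ≠ 0 := Complex.ofReal_ne_zero.2 hr.ne'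
  have r_mul_x_pos : 0 < r * x := mul_pos hr hx
  have two_mul_r_pos : 0 < 2 * r := mul_pos two_pos hr
  have half_eq : (x : ℂ) / 2 = ((r * x : ℝ) : ℂ) / ((2 * r : ℝ) : ℂ) := by
    push_cast
    field_simp
  rw [eulerKernel, half_eq, Complex.div_cpow_ofReal_nonneg r_mul_x_pos.le two_mul_r_pos.le,
    Complex.cpow_sub _ _ (Complex.ofReal_ne_zero.2 r_mul_x_pos.ne'), Complex.cpow_one,
    Complex.cpow_neg, div_eq_mul_inv]
  push_cast
  rw [show -(x : ℂ) * r = -(r * x) by ring]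
  field_simp

theorem integrableOn_eulerKernel {p : ℂ} (hp : 0 < p.re) {r : ℝ} (hr : 0 < r) :
    IntegrableOn (eulerKernel p r) (Set.Ioi 0) := by
  have convergent := Complex.GammaIntegral_convergent hp
  rw [← mul_zero r, ← integrableOn_Ioi_comp_mul_left_iff _ _ hr] at convergent
  exact IntegrableOn.congr_fun (convergent.const_mul _)
    (fun x hx => (eulerKernel_eq_GammaIntegrand p hr hx).symm) measurableSet_Ioi

theorem integral_eulerKernel {p : ℂ} (hp : 0 < p.re) {r : ℝ} (hr : 0 < r) :
    ∫ x in Set.Ioi 0, eulerKernel p r x =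
      Complex.Gamma p * ((2 * r : ℝ) : ℂ) ^ (-p) := by
  have r_ne_zero : (r : ℂ) ≠ 0 := Complex.ofReal_ne_zero.2 hr.ne'
  rw [setIntegral_congr_fun measurableSet_Ioi
      (fun x hx => eulerKernel_eq_GammaIntegrand p hr hx), integral_const_mul,
    integral_comp_mul_left_Ioi (fun y : ℝ => (Real.exp (-y) : ℂ) * (y : ℂ) ^ (p - 1)) 0 hr,
    mul_zero, ← Complex.GammaIntegral, ← Complex.Gamma_eq_integral hp, Complex.real_smul,
    Complex.ofReal_inv]
  field_simp

theorem ofReal_norm_eulerKernel (p : ℂ) (r : ℝ) {x : ℝ} (hx : 0 < x) :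
    ((‖eulerKernel p r x‖ : ℝ) : ℂ) = eulerKernel p.re r x := by
  have half_pos : 0 < x / 2 := by positivity
  have half_eq : (x : ℂ) / 2 = ((x / 2 : ℝ) : ℂ) := by push_cast; rfl
  have exp_eq : Complex.exp (-(x : ℂ) * r) = (Real.exp (-x * r) : ℂ) := by push_cast; rfl
  rw [eulerKernel, eulerKernel, half_eq, exp_eq, norm_mul, norm_mul,
    Complex.norm_cpow_eq_rpow_re_of_pos half_pos, norm_div, norm_one, Complex.norm_real,
    Complex.norm_real, Real.norm_of_nonneg hx.le, Real.norm_of_nonneg (Real.exp_pos _).le,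
    ← Complex.ofReal_cpow half_pos.le]
  push_cast
  rfl

theorem integral_norm_eulerKernel {p : ℂ} (hp : 0 < p.re) {r : ℝ} (hr : 0 < r) :
    ∫ x in Set.Ioi 0, ‖eulerKernel p r x‖ =
      Real.Gamma p.re * ‖((2 * r : ℝ) : ℂ) ^ (-p)‖ := by
  have two_mul_r_pos : 0 < 2 * r := mul_pos two_pos hr
  apply Complex.ofReal_injective
  rw [← integral_complex_ofReal, setIntegral_congr_fun measurableSet_Ioi
      (fun x hx => ofReal_norm_eulerKernel p r hx),
    integral_eulerKernel (by rwa [Complex.ofReal_re]) hr,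
    Complex.norm_cpow_eq_rpow_re_of_pos two_mul_r_pos, Complex.neg_re,
    Complex.ofReal_mul (Real.Gamma p.re), Complex.Gamma_ofReal,
    Complex.ofReal_cpow two_mul_r_pos.le, Complex.ofReal_neg]

theorem cpow_mul_macdonaldK_eq_integral (p w : ℂ) (x : ℝ) :
    ((x : ℂ) / 2) ^ p * macdonaldK w x * (1 / (x : ℂ)) =
      ∫ t in Set.Ioi (0 : ℝ), Complex.cosh (w * t) * eulerKernel p (Real.cosh t) x := by
  rw [macdonaldK, ← integral_const_mul, ← integral_mul_const]
  refine integral_congr_ae (.of_forall fun t => ?_)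
  simp only [eulerKernel]
  ring

theorem measurable_cosh_mul_eulerKernel (p w : ℂ) :
    Measurable fun q : ℝ × ℝ =>
      Complex.cosh (w * q.2) * eulerKernel p (Real.cosh q.2) q.1 := by
  have measurable_cosh : Measurable fun q : ℝ × ℝ => Complex.cosh (w * q.2) :=
    Continuous.measurable (by fun_prop)
  have measurable_exp : Measurable fun q : ℝ × ℝ =>
      Complex.exp (-(q.1 : ℂ) * (Real.cosh q.2 : ℝ)) := Continuous.measurable (by fun_prop)
  have measurable_cpow : Measurable fun q : ℝ × ℝ => ((q.1 : ℂ) / 2) ^ p := by fun_prop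
  exact measurable_cosh.mul ((measurable_cpow.mul measurable_exp).mul (by fun_prop))

theorem integrable_prod_cosh_mul_eulerKernel {u v : ℂ} (hu : 0 < u.re) (hv : 0 < v.re) :
    Integrable
      (fun q : ℝ × ℝ =>
        Complex.cosh ((u - v) * q.2) * eulerKernel (u + v) (Real.cosh q.2) q.1)
      ((volume.restrict (Set.Ioi 0)).prod (volume.restrict (Set.Ioi 0))) := by
  have re_pos : 0 < (u + v).re := by rw [Complex.add_re]; positivity
  rw [integrable_prod_iff' (measurable_cosh_mul_eulerKernel _ _).aestronglyMeasurable]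
  constructor
  · exact .of_forall fun t =>
      (integrableOn_eulerKernel re_pos (Real.cosh_pos t)).const_mul (Complex.cosh ((u - v) * t))
  refine ((integrable_cosh_mul_two_cosh_cpow hu hv).norm.const_mul
    (Real.Gamma (u + v).re)).integrableOn.congr_fun (fun t _ => ?_) measurableSet_Ioi
  simp only [norm_mul]
  rw [integral_const_mul, integral_norm_eulerKernel re_pos (Real.cosh_pos t)]
  ring

theorem stmt10_general (u v : ℂ) (hu : 0 < u.re) (hv : 0 < v.re) :
    IntegrableOn
      (fun x : ℝ => ((x : ℂ) / 2) ^ (u + v) * macdonaldK (u - v) x * (1 / (x : ℂ)))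
      (Set.Ioi (0 : ℝ)) ∧
    Complex.Gamma u * Complex.Gamma v
      = 4 * ∫ x in Set.Ioi (0 : ℝ),
          ((x : ℂ) / 2) ^ (u + v) * macdonaldK (u - v) x * (1 / (x : ℂ)) := by
  have integrable_prod := integrable_prod_cosh_mul_eulerKernel hu hv
  have re_pos : 0 < (u + v).re := by rw [Complex.add_re]; positivity
  simp only [cpow_mul_macdonaldK_eq_integral]
  refine ⟨integrable_prod.integral_prod_left, ?_⟩
  rw [integral_integral_swap integrable_prod]
  simp only [integral_const_mul, integral_eulerKernel re_pos (Real.cosh_pos _)]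
  rw [Complex.Gamma_mul_Gamma_eq_betaIntegral hu hv,
    betaIntegral_eq_integral_cosh_mul_two_cosh_cpow hu hv, mul_left_comm, ← integral_const_mul]
  simp only [mul_left_comm]

/-- For every `z ∈ ℂ` with `Re z > 0` and every real `s`,
`Γ(z+is)Γ(z−is) = 4 ∫_0^∞ (x/2)^{2z} K_{2is}(x) (1/x) dx`,
the integral converging absolutely. -/
theorem stmt10 (z : ℂ) (hz : 0 < z.re) (s : ℝ) :
    IntegrableOn
      (fun x : ℝ =>
        ((x : ℂ) / 2) ^ (2 * z) * macdonaldK (2 * Complex.I * (s : ℂ)) x * (1 / (x : ℂ)))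
      (Set.Ioi (0 : ℝ)) ∧
    Complex.Gamma (z + Complex.I * (s : ℂ)) * Complex.Gamma (z - Complex.I * (s : ℂ))
      = 4 * ∫ x in Set.Ioi (0 : ℝ),
          ((x : ℂ) / 2) ^ (2 * z) * macdonaldK (2 * Complex.I * (s : ℂ)) x * (1 / (x : ℂ)) := by
  have general := stmt10_general (z + Complex.I * s) (z - Complex.I * s)
    (by simpa using hz) (by simpa using hz)
  rwa [add_add_sub_cancel, add_sub_sub_cancel, ← two_mul, ← two_mul, ← mul_assoc] at general
end
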